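/- Let x be a complex number and let a, d be complex numbers such that 2a+1 and d are not nonpositive integers or zero, and a+1/2 and a+3/2 are not nonpositive integers or zero. Then e^{−x} · Σ_{k=0}^∞ (a)_k (d+1)_k (2x)^k / ((2a+1)_k (d)_k k!) = Σ_{k=0}^∞ (x²/4)^k / ((a+1/2)_k k!) − ((1 − 2a/d) x /(2a+1)) · Σ_{k=0}^∞ (x²/4)^k / ((a+3/2)_k k!). -/

import Mathlib

/-- The Pochhammer symbol `(a)_k = a (a+1) ⋯ (a+k-1)`. -/
noncomputable def poch (a : ℂ) (k : ℕ) : ℂ := Polynomial.eval a (ascPochhammer ℂ k)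

open PowerSeries in
noncomputable def auxF (b : ℂ) : PowerSeries ℂ :=
  PowerSeries.mk fun n => if Even n then (1 / 4) ^ (n / 2) / (poch b (n / 2) * (Nat.factorial (n / 2) : ℂ)) else 0

theorem poch_zero (b : ℂ) : poch b 0 = 1 := by simp [poch]

theorem poch_succ (b : ℂ) (k : ℕ) : poch b (k + 1) = poch b k * (b + k) := by
  simp [poch, ascPochhammer_succ_right]

theorem poch_succ_left (b : ℂ) (k : ℕ) : poch b (k + 1) = b * poch (b + 1) k := by
  simp [poch, ascPochhammer_succ_left, Polynomial.eval_comp]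

theorem poch_ne (b : ℂ) (hb : ∀ n : ℕ, b ≠ -(n : ℂ)) (k : ℕ) : poch b k ≠ 0 := by
  induction k with
  | zero => simp [poch_zero]
  | succ k ih =>
    rw [poch_succ]
    refine mul_ne_zero ih fun h => hb k ?_
    linear_combination h

theorem auxF_even (b : ℂ) (k : ℕ) :
    PowerSeries.coeff (2 * k) (auxF b) = (1 / 4) ^ k / (poch b k * (Nat.factorial k : ℂ)) := by
  simp [auxF]

theorem auxF_odd (b : ℂ) (k : ℕ) : PowerSeries.coeff (2 * k + 1) (auxF b) = 0 := by
  simp [auxF]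

theorem summable_F (b z : ℂ) :
    Summable fun k : ℕ => z ^ k / (poch b k * (Nat.factorial k : ℂ)) := by
  refine summable_of_ratio_norm_eventually_le (r := 1 / 2) (by norm_num) ?_
  obtain ⟨N, hN⟩ := exists_nat_ge (‖b‖ + 1 + 2 * ‖z‖)
  filter_upwards [Filter.eventually_ge_atTop N] with k hk
  have hk' : (N : ℝ) ≤ k := by exact_mod_cast hk
  have h0 : 0 ≤ ‖z‖ := norm_nonneg z
  have h0b : 0 ≤ ‖b‖ := norm_nonneg b
  have h1 : 1 ≤ ‖b + k‖ := by
    have h := norm_sub_le (b + k) b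
    have h2 : ‖b + (k : ℂ) - b‖ = k := by simp
    rw [h2] at h
    linarith
  have h3 : ‖((k : ℂ) + 1)‖ = k + 1 := by
    have := Complex.norm_natCast (k + 1)
    push_cast at this
    exact this
  have e : z ^ (k + 1) / (poch b (k + 1) * (Nat.factorial (k + 1) : ℂ))
      = (z / ((b + k) * (k + 1))) * (z ^ k / (poch b k * (Nat.factorial k : ℂ))) := by
    rw [poch_succ, Nat.factorial_succ, div_mul_div_comm]
    push_cast
    congr 1 <;> ring
  rw [e, norm_mul]
  refine mul_le_mul_of_nonneg_right ?_ (norm_nonneg _)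
  rw [norm_div, norm_mul, h3, div_le_iff₀ (by positivity)]
  nlinarith

theorem auxF_hasSum (b x : ℂ) :
    HasSum (fun n => PowerSeries.coeff n (auxF b) * x ^ n)
      (∑' k : ℕ, (x ^ 2 / 4) ^ k / (poch b k * (Nat.factorial k : ℂ))) := by
  rw [← add_zero (∑' k : ℕ, (x ^ 2 / 4) ^ k / (poch b k * (Nat.factorial k : ℂ)))]
  refine HasSum.even_add_odd ?_ ?_
  · have e : (fun k => PowerSeries.coeff (2 * k) (auxF b) * x ^ (2 * k))
        = fun k : ℕ => (x ^ 2 / 4) ^ k / (poch b k * (Nat.factorial k : ℂ)) := by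
      funext k
      rw [auxF_even, pow_mul, div_mul_eq_mul_div, ← mul_pow]
      congr 2
      ring
    rw [e]
    exact (summable_F b _).hasSum
  · simp [auxF_odd]

theorem auxF_deriv (a : ℂ) (ha1 : ∀ n : ℕ, a + 1 / 2 ≠ -(n : ℂ)) (ha3 : ∀ n : ℕ, a + 3 / 2 ≠ -(n : ℂ))
    (h0 : 2 * a + 1 ≠ 0) :
    PowerSeries.C (2 * a + 1) * PowerSeries.derivative ℂ (auxF (a + 1 / 2))
      = PowerSeries.X * auxF (a + 3 / 2) := by
  ext n
  rw [PowerSeries.coeff_C_mul, PowerSeries.coeff_derivative]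
  obtain ⟨k, rfl | rfl⟩ := n.even_or_odd'
  · rw [auxF_odd]
    cases k with
    | zero => simp
    | succ k =>
      rw [show 2 * (k + 1) = (2 * k + 1) + 1 by ring, PowerSeries.coeff_succ_X_mul, auxF_odd]; simp
  · rw [PowerSeries.coeff_succ_X_mul, show 2 * k + 1 + 1 = 2 * (k + 1) by ring, auxF_even, auxF_even,
      poch_succ_left, show a + 1 / 2 + 1 = a + 3 / 2 by ring, Nat.factorial_succ]
    have h1 := poch_ne _ ha3 k
    have h2 : (Nat.factorial k : ℂ) ≠ 0 := by exact_mod_cast Nat.factorial_ne_zero k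
    have h3 : (k : ℂ) + 1 ≠ 0 := by exact_mod_cast Nat.succ_ne_zero k
    have h4 : a + 1 / 2 = (2 * a + 1) / 2 := by ring
    rw [h4]
    push_cast
    field_simp
    ring

theorem auxF_deriv' (a : ℂ) (ha1 : ∀ n : ℕ, a + 1 / 2 ≠ -(n : ℂ)) (ha3 : ∀ n : ℕ, a + 3 / 2 ≠ -(n : ℂ))
    (h0 : 2 * a + 1 ≠ 0) :
    PowerSeries.X * PowerSeries.derivative ℂ (auxF (a + 3 / 2))
      = PowerSeries.C (2 * a + 1) * (auxF (a + 1 / 2) - auxF (a + 3 / 2)) := by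
  have key : ∀ n : ℕ, PowerSeries.coeff n (PowerSeries.X * PowerSeries.derivative ℂ (auxF (a + 3 / 2)))
      = n * PowerSeries.coeff n (auxF (a + 3 / 2)) := by
    intro n
    cases n with
    | zero => simp
    | succ n => rw [PowerSeries.coeff_succ_X_mul, PowerSeries.coeff_derivative]; push_cast; ring
  ext n
  rw [key, PowerSeries.coeff_C_mul, map_sub]
  obtain ⟨k, rfl | rfl⟩ := n.even_or_odd'
  · rw [auxF_even, auxF_even]
    have h1 := poch_ne _ ha3 k
    have h1' := poch_ne _ ha1 k
    have h2 : (Nat.factorial k : ℂ) ≠ 0 := by exact_mod_cast Nat.factorial_ne_zero k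
    have h3 : poch (a + 1 / 2) k * (a + 1 / 2 + k) = (a + 1 / 2) * poch (a + 3 / 2) k := by
      rw [← poch_succ, poch_succ_left, show a + 1 / 2 + 1 = a + 3 / 2 by ring]
    push_cast
    rw [div_sub_div _ _ (mul_ne_zero h1' h2) (mul_ne_zero h1 h2), mul_div_assoc', mul_div_assoc',
      div_eq_div_iff (mul_ne_zero h1 h2) (mul_ne_zero (mul_ne_zero h1' h2) (mul_ne_zero h1 h2))]
    linear_combination (2 * (1 / 4 : ℂ) ^ k * poch (a + 3 / 2) k * (Nat.factorial k : ℂ) ^ 2) * h3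
  · simp [auxF_odd]

theorem auxF_zero (b : ℂ) : PowerSeries.coeff 0 (auxF b) = 1 := by
  have := auxF_even b 0
  simpa [poch_zero] using this

theorem coeffs_PQ (a : ℂ) (h2a1 : ∀ n : ℕ, 2 * a + 1 ≠ -(n : ℂ))
    (ha1 : ∀ n : ℕ, a + 1 / 2 ≠ -(n : ℂ)) (ha3 : ∀ n : ℕ, a + 3 / 2 ≠ -(n : ℂ)) (n : ℕ) :
    PowerSeries.coeff n (PowerSeries.exp ℂ * (auxF (a + 1 / 2)
        - PowerSeries.C (1 / (2 * a + 1)) * (PowerSeries.X * auxF (a + 3 / 2))))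
      = poch a n * 2 ^ n / (poch (2 * a + 1) n * (Nat.factorial n : ℂ)) ∧
    PowerSeries.coeff n (PowerSeries.exp ℂ * auxF (a + 3 / 2))
      = poch (a + 1) n * 2 ^ n / (poch (2 * a + 2) n * (Nat.factorial n : ℂ)) := by
  have h0 : 2 * a + 1 ≠ 0 := by simpa using h2a1 0
  have hb : ∀ n : ℕ, 2 * a + 2 ≠ -(n : ℂ) := by
    intro n h
    apply h2a1 (n + 1)
    push_cast
    linear_combination h
  set G := auxF (a + 1 / 2) with hG
  set H := auxF (a + 3 / 2) with hH
  have dG := auxF_deriv a ha1 ha3 h0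
  have dH := auxF_deriv' a ha1 ha3 h0
  rw [← hG, ← hH] at dG dH
  have hC : PowerSeries.C (1 / (2 * a + 1)) * PowerSeries.C (2 * a + 1) = (1 : PowerSeries ℂ) := by
    rw [← map_mul, one_div_mul_cancel h0, map_one]
  have hC1 : PowerSeries.C (2 * a) = PowerSeries.C (2 * a + 1) - (1 : PowerSeries ℂ) := by
    rw [map_add, map_one, add_sub_cancel_right]
  set c : PowerSeries ℂ := PowerSeries.C (1 / (2 * a + 1)) with hc
  set P := PowerSeries.exp ℂ * (G - c * (PowerSeries.X * H)) with hP
  set Q := PowerSeries.exp ℂ * H with hQ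
  have dP : PowerSeries.derivative ℂ P = c * (PowerSeries.C (2 * a) * Q) := by
    rw [hP, hQ]
    simp only [Derivation.leibniz, map_sub, smul_eq_mul, PowerSeries.derivative_exp,
      PowerSeries.derivative_X]
    have : PowerSeries.derivative ℂ c = 0 := by rw [hc, PowerSeries.derivative_C]
    rw [this, hC1]
    linear_combination (PowerSeries.exp ℂ) * c * dG - (PowerSeries.exp ℂ) * c * dH
      - (PowerSeries.exp ℂ) * (PowerSeries.derivative ℂ G + G) * hC
  have dQ : PowerSeries.X * PowerSeries.derivative ℂ Q
      = PowerSeries.C 2 * (PowerSeries.X * Q) + PowerSeries.C (2 * a + 1) * (P - Q) := by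
    rw [hP, hQ]
    simp only [Derivation.leibniz, smul_eq_mul, PowerSeries.derivative_exp]
    have : PowerSeries.C (2 : ℂ) = (2 : PowerSeries ℂ) := map_ofNat _ 2
    rw [this]
    linear_combination (PowerSeries.exp ℂ) * dH
      + (PowerSeries.exp ℂ) * PowerSeries.X * H * hC
  have rP : ∀ n : ℕ, PowerSeries.coeff (n + 1) P * (n + 1)
      = 1 / (2 * a + 1) * (2 * a * PowerSeries.coeff n Q) := by
    intro n
    rw [← PowerSeries.coeff_derivative, dP, hc, PowerSeries.coeff_C_mul, PowerSeries.coeff_C_mul]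
  have rQ : ∀ n : ℕ, PowerSeries.coeff (n + 1) Q * (n + 1)
      = 2 * PowerSeries.coeff n Q
        + (2 * a + 1) * (PowerSeries.coeff (n + 1) P - PowerSeries.coeff (n + 1) Q) := by
    intro n
    have := congrArg (PowerSeries.coeff (n + 1)) dQ
    rw [PowerSeries.coeff_succ_X_mul, PowerSeries.coeff_derivative, map_add,
      PowerSeries.coeff_C_mul, PowerSeries.coeff_C_mul, PowerSeries.coeff_succ_X_mul, map_sub] at this
    exact this
  have P0 : PowerSeries.coeff 0 P = 1 := by
    have := auxF_zero (a + 1 / 2)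
    rw [PowerSeries.coeff_zero_eq_constantCoeff] at *
    rw [hP, hG, map_mul, map_sub, this]
    simp
  have Q0 : PowerSeries.coeff 0 Q = 1 := by
    have := auxF_zero (a + 3 / 2)
    rw [PowerSeries.coeff_zero_eq_constantCoeff] at *
    rw [hQ, hH, map_mul, this]
    simp
  have key : ∀ n : ℕ, PowerSeries.coeff n Q
      = poch (a + 1) n * 2 ^ n / (poch (2 * a + 2) n * (Nat.factorial n : ℂ)) := by
    intro n
    induction n with
    | zero => simp [Q0, poch_zero]
    | succ n ih =>
      have h1 := rP n
      have h2 := rQ n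
      have h3 : (n : ℂ) + 1 ≠ 0 := by exact_mod_cast Nat.succ_ne_zero n
      have h4 : 2 * a + 2 + (n : ℂ) ≠ 0 := fun h => hb n (by linear_combination h)
      have h5 := poch_ne _ hb n
      have h6 : (Nat.factorial n : ℂ) ≠ 0 := by exact_mod_cast Nat.factorial_ne_zero n
      have h7 : PowerSeries.coeff (n + 1) Q
          = PowerSeries.coeff n Q * (2 * (a + 1 + n)) / ((2 * a + 2 + n) * (n + 1)) := by
        rw [eq_div_iff (mul_ne_zero h4 h3)]
        have h8 : (2 * a + 1) * (1 / (2 * a + 1)) = 1 := mul_one_div_cancel h0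
        linear_combination ((n : ℂ) + 1) * h2 + (2 * a + 1) * h1
          + 2 * a * PowerSeries.coeff n Q * h8
      rw [h7, ih, poch_succ, poch_succ, Nat.factorial_succ, pow_succ, div_mul_eq_mul_div, div_div]
      push_cast
      congr 1 <;> ring
  refine ⟨?_, key n⟩
  cases n with
  | zero => simp [P0, poch_zero]
  | succ n =>
    have h1 := rP n
    have h3 : (n : ℂ) + 1 ≠ 0 := by exact_mod_cast Nat.succ_ne_zero n
    have h5 := poch_ne _ hb n
    have h6 : (Nat.factorial n : ℂ) ≠ 0 := by exact_mod_cast Nat.factorial_ne_zero n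
    rw [eq_div_of_mul_eq h3 h1, key, poch_succ_left, poch_succ_left,
      show 2 * a + 1 + 1 = 2 * a + 2 by ring, Nat.factorial_succ]
    push_cast
    field_simp
    ring

/-- Example (a) of the paper:
`e^{-x} ₂F₂(a, d+1; 2a+1, d; 2x) = ₀F₁(-; a+1/2; x²/4) - ((1-2a/d)x/(2a+1)) ₀F₁(-; a+3/2; x²/4)`. -/
theorem example_exp
    (x a d : ℂ)
    (h2a1 : ∀ n : ℕ, 2 * a + 1 ≠ -(n : ℂ))
    (hd : ∀ n : ℕ, d ≠ -(n : ℂ))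
    (ha1 : ∀ n : ℕ, a + 1 / 2 ≠ -(n : ℂ))
    (ha3 : ∀ n : ℕ, a + 3 / 2 ≠ -(n : ℂ)) :
    Complex.exp (-x) *
        ∑' k : ℕ, poch a k * poch (d + 1) k * (2 * x) ^ k /
          (poch (2 * a + 1) k * poch d k * (Nat.factorial k : ℂ))
      = (∑' k : ℕ, (x ^ 2 / 4) ^ k / (poch (a + 1 / 2) k * (Nat.factorial k : ℂ)))
        - ((1 - 2 * a / d) * x / (2 * a + 1)) *
          ∑' k : ℕ, (x ^ 2 / 4) ^ k / (poch (a + 3 / 2) k * (Nat.factorial k : ℂ)) := by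
  have h0 : 2 * a + 1 ≠ 0 := by simpa using h2a1 0
  have hd0 : d ≠ 0 := by simpa using hd 0
  set SG := ∑' k : ℕ, (x ^ 2 / 4) ^ k / (poch (a + 1 / 2) k * (Nat.factorial k : ℂ)) with hSG
  set SH := ∑' k : ℕ, (x ^ 2 / 4) ^ k / (poch (a + 3 / 2) k * (Nat.factorial k : ℂ)) with hSH
  have sG := auxF_hasSum (a + 1 / 2) x
  have sH := auxF_hasSum (a + 3 / 2) x
  rw [← hSG] at sG
  rw [← hSH] at sH
  have sXH : HasSum (fun n => PowerSeries.coeff n (PowerSeries.X * auxF (a + 3 / 2)) * x ^ n)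
      (x * SH) := by
    rw [← hasSum_nat_add_iff' 1]
    have := sH.mul_left x
    simp only [PowerSeries.coeff_succ_X_mul, Finset.range_one, Finset.sum_singleton,
      PowerSeries.coeff_zero_X_mul, zero_mul, sub_zero]
    refine this.congr_fun ?_
    intro n
    ring
  set R : PowerSeries ℂ := auxF (a + 1 / 2)
    - PowerSeries.C ((1 - 2 * a / d) / (2 * a + 1)) * (PowerSeries.X * auxF (a + 3 / 2)) with hR
  have sR : HasSum (fun n => PowerSeries.coeff n R * x ^ n)
      (SG - (1 - 2 * a / d) / (2 * a + 1) * (x * SH)) := by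
    have := sG.sub (sXH.mul_left ((1 - 2 * a / d) / (2 * a + 1)))
    refine this.congr_fun ?_
    intro n
    rw [hR, map_sub, PowerSeries.coeff_C_mul]
    ring
  have sE : HasSum (fun n => PowerSeries.coeff n (PowerSeries.exp ℂ) * x ^ n) (Complex.exp x) := by
    have := NormedSpace.expSeries_div_hasSum_exp x
    rw [← Complex.exp_eq_exp_ℂ] at this
    refine this.congr_fun ?_
    intro n
    rw [PowerSeries.coeff_exp]
    simp
    ring
  have prod := tsum_mul_tsum_eq_tsum_sum_antidiagonal_of_summable_norm
    sE.summable.norm sR.summable.norm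
  rw [sE.tsum_eq, sR.tsum_eq] at prod
  have co : ∀ k : ℕ, poch a k * poch (d + 1) k * (2 * x) ^ k /
          (poch (2 * a + 1) k * poch d k * (Nat.factorial k : ℂ))
      = ∑ kl ∈ Finset.HasAntidiagonal.antidiagonal k, (PowerSeries.coeff kl.1 (PowerSeries.exp ℂ) * x ^ kl.1)
          * (PowerSeries.coeff kl.2 R * x ^ kl.2) := by
    intro k
    have e1 : ∑ kl ∈ Finset.HasAntidiagonal.antidiagonal k, (PowerSeries.coeff kl.1 (PowerSeries.exp ℂ) * x ^ kl.1)
          * (PowerSeries.coeff kl.2 R * x ^ kl.2)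
        = PowerSeries.coeff k (PowerSeries.exp ℂ * R) * x ^ k := by
      rw [PowerSeries.coeff_mul, Finset.sum_mul]
      refine Finset.sum_congr rfl fun p hp => ?_
      rw [← Finset.HasAntidiagonal.mem_antidiagonal.mp hp, pow_add]
      ring
    have e2 : PowerSeries.exp ℂ * R = PowerSeries.exp ℂ * (auxF (a + 1 / 2)
        - PowerSeries.C (1 / (2 * a + 1)) * (PowerSeries.X * auxF (a + 3 / 2)))
        + PowerSeries.C (2 * a / d / (2 * a + 1)) *
          (PowerSeries.X * (PowerSeries.exp ℂ * auxF (a + 3 / 2))) := by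
      rw [hR, sub_div, map_sub]
      ring
    have e3 : poch (d + 1) k * d = poch d k * (d + k) := by
      rw [← poch_succ, poch_succ_left]; ring
    have hpd := poch_ne d hd k
    have hpa := poch_ne _ h2a1 k
    have hf : (Nat.factorial k : ℂ) ≠ 0 := by exact_mod_cast Nat.factorial_ne_zero k
    have e4 : poch (d + 1) k = poch d k * (d + k) / d := by rw [← e3]; field_simp
    rw [e1, e2, map_add, PowerSeries.coeff_C_mul, (coeffs_PQ a h2a1 ha1 ha3 k).1, e4, mul_pow]
    cases k with
    | zero => simp [poch_zero, hd0]
    | succ n =>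
      rw [PowerSeries.coeff_succ_X_mul, (coeffs_PQ a h2a1 ha1 ha3 n).2]
      have hb : poch (2 * a + 2) n ≠ 0 := by
        rw [poch_succ_left, show 2 * a + 1 + 1 = 2 * a + 2 by ring] at hpa
        exact right_ne_zero_of_mul hpa
      have hf' : (Nat.factorial n : ℂ) ≠ 0 := by exact_mod_cast Nat.factorial_ne_zero n
      have h3 : (n : ℂ) + 1 ≠ 0 := by exact_mod_cast Nat.succ_ne_zero n
      generalize poch d (n + 1) = pd at *
      rw [poch_succ_left, poch_succ_left,
        show 2 * a + 1 + 1 = 2 * a + 2 by ring, Nat.factorial_succ]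
      push_cast
      field_simp
      ring
  rw [tsum_congr co, ← prod, ← mul_assoc, ← Complex.exp_add, neg_add_cancel, Complex.exp_zero]
  ring
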